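/- Let ε_k → 0⁺. On the set Y of Young measures ν with ν_x([−1,1]) = 1 for a.e. x, define E_{ε}(ν) = (1/ε)∫₀¹∫_ℝ Φ(λ) dν_x(λ) dx, and define E₀(ν) = 0 if ν_x({−1,1}) = 1 for a.e. x and E₀(ν) = +∞ otherwise. Then E_{ε_k} Γ-converges to E₀ on Y with respect to narrow convergence of Young measures. -/

import Mathlib

open MeasureTheory Filter
open scoped Classical

noncomputable section

/-- The open unit interval `(0,1)` as a subset of `ℝ`. -/
def I01 : Set ℝ := Set.Ioo 0 1

/-- The double-well potential `Φ(s) = (s² − 1)²`. -/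
def Phi (s : ℝ) : ℝ := (s ^ 2 - 1) ^ 2

/-- A Young measure on `(0,1)`: a measurable family of Borel probability measures on `ℝ`. -/
def IsYoungMeasure (ν : ℝ → Measure ℝ) : Prop :=
  Measurable ν ∧ ∀ x, IsProbabilityMeasure (ν x)

/-- The type of Young measures `ν` with `ν_x([−1,1]) = 1` for a.e. `x ∈ (0,1)`. -/
def YMb := {ν : ℝ → Measure ℝ // IsYoungMeasure ν ∧
  ∀ᵐ x ∂(volume.restrict I01), ν x (Set.Icc (-1 : ℝ) 1) = 1}

/-- Narrow convergence of Young measures. -/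
def NarrowConv (ν : ℕ → ℝ → Measure ℝ) (μ : ℝ → Measure ℝ) : Prop :=
  ∀ f : ℝ → ℝ, Continuous f → (∃ C, ∀ s, |f s| ≤ C) →
    ∀ g : ℝ → ℝ, IntegrableOn g I01 →
      Tendsto (fun n => ∫ x in I01, g x * ∫ t, f t ∂(ν n x)) atTop
        (nhds (∫ x in I01, g x * ∫ t, f t ∂(μ x)))

/-- Γ-convergence of functionals with values in `ℝ ∪ {±∞}`. -/
def GammaConv {X : Type*} (conv : (ℕ → X) → X → Prop)
    (F : ℕ → X → EReal) (Flim : X → EReal) : Prop :=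
  (∀ (xs : ℕ → X) (x : X), conv xs x →
      Flim x ≤ Filter.liminf (fun n => F n (xs n)) Filter.atTop) ∧
  (∀ x : X, ∃ xs : ℕ → X, conv xs x ∧
      Filter.limsup (fun n => F n (xs n)) Filter.atTop ≤ Flim x)

/-!
The energy `∫₀¹ ∫ Φ dν_x dx` is the integral of `Φ` against the average `∫₀¹ ν_x dx`, a measure
carried by `[-1, 1]`, where `Φ` agrees with a bounded continuous function. Hence the energy is
continuous under narrow convergence. A nonnegative lower semicontinuous functional multiplied by
factors tending to `+∞` Γ-converges to the indicator function of its zero set: where the functional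
is positive the multiples blow up, and constant sequences are recovery sequences. Finally, the
energy vanishes exactly when the average, and therefore almost every `ν_x`, is carried by the zero
set of `Φ`.
-/

open ProbabilityTheory Set
open scoped Topology

theorem gammaConv_mul_of_tendsto_atTop {X : Type*} {conv : (ℕ → X) → X → Prop} {J : X → ℝ}
    {c : ℕ → ℝ} (hconst : ∀ x, conv (fun _ => x) x) (hJ_nonneg : ∀ x, 0 ≤ J x)
    (hJ_lsc : ∀ xs x, conv xs x → ∀ a < J x, ∀ᶠ n in atTop, a < J (xs n))
    (hc : Tendsto c atTop atTop) :
    GammaConv conv (fun n x => ((c n * J x : ℝ) : EReal))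
      (fun x => if J x = 0 then (0 : EReal) else ⊤) := by
  refine ⟨fun xs x hxs => ?_, fun x => ⟨fun _ => x, hconst x, ?_⟩⟩
  · by_cases hx : J x = 0
    · simp only [hx, if_true]
      refine le_liminf_of_le (by isBoundedDefault) ?_
      filter_upwards [hc.eventually_ge_atTop 0] with n hn
      exact EReal.coe_nonneg.2 (mul_nonneg hn (hJ_nonneg _))
    · have half_value_pos : 0 < J x / 2 := half_pos ((hJ_nonneg x).lt_of_ne' hx)
      have lower_bound : ∀ᶠ n in atTop, c n * (J x / 2) ≤ c n * J (xs n) := by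
        filter_upwards [hc.eventually_ge_atTop 0, hJ_lsc xs x hxs (J x / 2) (by linarith)]
          with n hn hJn using mul_le_mul_of_nonneg_left hJn.le hn
      have blow_up : Tendsto (fun n => c n * J (xs n)) atTop atTop :=
        tendsto_atTop_mono' atTop lower_bound (hc.atTop_mul_const half_value_pos)
      exact le_top.trans (EReal.tendsto_coe_nhds_top_iff.2 blow_up).liminf_eq.ge
  · by_cases hx : J x = 0 <;> simp [hx]

theorem exists_continuous_bounded_eqOn_of_isCompact {β : Type*} [TopologicalSpace β] {K : Set β}
    (hK : IsCompact K) {W : β → ℝ} (hW : Continuous W) :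
    ∃ f : β → ℝ, Continuous f ∧ (∃ C, ∀ t, |f t| ≤ C) ∧ EqOn f W K := by
  obtain ⟨C, hC⟩ := hK.exists_bound_of_continuousOn hW.continuousOn
  refine ⟨fun t => max (-|C|) (min |C| (W t)), by fun_prop, ⟨|C|, fun t => ?_⟩, fun t ht => ?_⟩
  · exact abs_le.2 ⟨le_max_left _ _,
      max_le (neg_le_self (abs_nonneg C)) (min_le_left _ _)⟩
  · obtain ⟨hlower, hupper⟩ := abs_le.1 ((hC t ht).trans (le_abs_self C))
    simp only [min_eq_right hupper, max_eq_right hlower]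

theorem integrable_of_continuousOn_of_ae_mem_isCompact {β : Type*} [TopologicalSpace β]
    [T2Space β] [MeasurableSpace β] [OpensMeasurableSpace β] {μ : Measure β}
    [IsFiniteMeasureOnCompacts μ] {K : Set β} (hK : IsCompact K) (hμK : ∀ᵐ t ∂μ, t ∈ K)
    {W : β → ℝ} (hW : ContinuousOn W K) : Integrable W μ := by
  rw [← Measure.restrict_eq_self_of_ae_mem hμK]
  exact hW.integrableOn_compact hK

theorem ae_comp_mem_iff {α β : Type*} [MeasurableSpace α] [MeasurableSpace β]
    {μ : Measure α} {κ : Kernel α β} [IsMarkovKernel κ] {S : Set β} (hS : MeasurableSet S) :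
    (∀ᵐ t ∂(κ ∘ₘ μ), t ∈ S) ↔ ∀ᵐ x ∂μ, κ x S = 1 :=
  (Measure.ae_comp_iff hS).trans
    (eventually_congr (.of_forall fun _ => mem_ae_iff_prob_eq_one hS))

theorem integral_measure_comp {α β E : Type*} [MeasurableSpace α] [MeasurableSpace β]
    [NormedAddCommGroup E] [NormedSpace ℝ E] {μ : Measure α} {κ : Kernel α β} {f : β → E}
    (hf : Integrable f (κ ∘ₘ μ)) :
    ∫ t, f t ∂(κ ∘ₘ μ) = ∫ x, ∫ t, f t ∂(κ x) ∂μ := by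
  rw [Measure.comp_eq_comp_const_apply] at hf ⊢
  rw [Kernel.integral_comp hf, Kernel.const_apply]

theorem Phi_continuous : Continuous Phi := by
  unfold Phi
  fun_prop

theorem Phi_nonneg (s : ℝ) : 0 ≤ Phi s := sq_nonneg _

theorem Phi_eq_zero_iff {s : ℝ} : Phi s = 0 ↔ s = -1 ∨ s = 1 := by
  rw [Phi, sq_eq_zero_iff, sub_eq_zero, sq_eq_one_iff, or_comm]

instance : IsFiniteMeasure (volume.restrict I01) :=
  ⟨by simp [I01]⟩

namespace YMb

/-- A Young measure as a Markov kernel, so that Mathlib's composition `κ ∘ₘ μ` applies to it. -/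
def kernel (ν : YMb) : Kernel ℝ ℝ := ⟨ν.1, ν.2.1.1⟩

instance (ν : YMb) : IsMarkovKernel ν.kernel := ⟨ν.2.1.2⟩

/-- The average `∫₀¹ ν_x dx` of a Young measure, through which the energies depend on `ν`. -/
def average (ν : YMb) : Measure ℝ := ν.kernel ∘ₘ volume.restrict I01

instance (ν : YMb) : IsFiniteMeasure ν.average := by
  unfold average
  infer_instance

variable {W : ℝ → ℝ}

theorem ae_average_mem_iff (ν : YMb) {S : Set ℝ} (hS : MeasurableSet S) :
    (∀ᵐ t ∂ν.average, t ∈ S) ↔ ∀ᵐ x ∂(volume.restrict I01), ν.1 x S = 1 :=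
  ae_comp_mem_iff hS

theorem ae_average_mem_Icc (ν : YMb) : ∀ᵐ t ∂ν.average, t ∈ Icc (-1 : ℝ) 1 :=
  (ν.ae_average_mem_iff measurableSet_Icc).2 ν.2.2

theorem integrable_average (ν : YMb) (hW : Continuous W) : Integrable W ν.average :=
  integrable_of_continuousOn_of_ae_mem_isCompact isCompact_Icc ν.ae_average_mem_Icc
    hW.continuousOn

theorem integral_average (ν : YMb) (hW : Continuous W) :
    ∫ t, W t ∂ν.average = ∫ x in I01, ∫ t, W t ∂(ν.1 x) :=
  integral_measure_comp (ν.integrable_average hW)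

theorem integral_average_eq_zero_iff (ν : YMb) (hW : Continuous W) (hW_nonneg : ∀ s, 0 ≤ W s) :
    ∫ t, W t ∂ν.average = 0 ↔
      ∀ᵐ x ∂(volume.restrict I01), ν.1 x {s | W s = 0} = 1 := by
  rw [integral_eq_zero_iff_of_nonneg hW_nonneg (ν.integrable_average hW)]
  exact ν.ae_average_mem_iff (isClosed_eq hW continuous_const).measurableSet

theorem tendsto_integral_average {νs : ℕ → YMb} {ν : YMb}
    (hν : NarrowConv (fun n => (νs n).1) ν.1) (hW : Continuous W) :
    Tendsto (fun n => ∫ t, W t ∂(νs n).average) atTop (𝓝 (∫ t, W t ∂ν.average)) := by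
  obtain ⟨f, hf, hf_bdd, hfW⟩ :=
    exists_continuous_bounded_eqOn_of_isCompact (isCompact_Icc (a := (-1 : ℝ)) (b := 1)) hW
  have integral_eq (ρ : YMb) : ∫ t, W t ∂ρ.average = ∫ x in I01, 1 * ∫ t, f t ∂(ρ.1 x) := by
    simp only [one_mul]
    rw [← ρ.integral_average hf]
    exact integral_congr_ae (ρ.ae_average_mem_Icc.mono fun t ht => (hfW ht).symm)
  simp only [integral_eq]
  exact hν f hf hf_bdd (fun _ => 1) (integrable_const 1)

end YMb

theorem doubleWell_gammaConv_general {W : ℝ → ℝ} (hW : Continuous W) (hW_nonneg : ∀ s, 0 ≤ W s)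
    {ε : ℕ → ℝ} (hε : Tendsto ε atTop (𝓝[>] 0)) :
    GammaConv (fun (νs : ℕ → YMb) (ν : YMb) => NarrowConv (fun n => (νs n).1) ν.1)
      (fun k ν => (((1 / ε k) * ∫ x in I01, ∫ t, W t ∂(ν.1 x) : ℝ) : EReal))
      (fun ν => if ∀ᵐ x ∂(volume.restrict I01), ν.1 x {s | W s = 0} = 1 then
          (0 : EReal) else ⊤) := by
  simp only [one_div, ← YMb.integral_average _ hW,
    ← YMb.integral_average_eq_zero_iff _ hW hW_nonneg]
  exact gammaConv_mul_of_tendsto_atTop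
    (fun _ _ _ _ _ _ => tendsto_const_nhds)
    (fun _ => integral_nonneg hW_nonneg)
    (fun _ _ hν _ ha => (YMb.tendsto_integral_average hν hW).eventually_const_lt ha)
    hε.inv_tendsto_nhdsGT_zero

/-- Γ-convergence of the scaled double-well potentials `E_ε(ν) = (1/ε)∫₀¹∫ Φ dν_x dx`, as
`ε → 0⁺`, to the functional which is `0` on Young measures supported on `{−1,1}` and `+∞`
otherwise. -/
theorem doubleWell_gammaConv
    (ε : ℕ → ℝ) (hεpos : ∀ k, 0 < ε k) (hε : Tendsto ε atTop (nhds 0)) :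
    GammaConv (fun (νs : ℕ → YMb) (ν : YMb) => NarrowConv (fun n => (νs n).1) ν.1)
      (fun k ν => (((1 / ε k) * ∫ x in I01, ∫ t, Phi t ∂(ν.1 x) : ℝ) : EReal))
      (fun ν => if ∀ᵐ x ∂(volume.restrict I01), ν.1 x ({-1, 1} : Set ℝ) = 1 then
          (0 : EReal) else ⊤) := by
  have zero_set : {s | Phi s = 0} = {-1, 1} := Set.ext fun _ => Phi_eq_zero_iff
  simpa only [zero_set] using doubleWell_gammaConv_general Phi_continuous Phi_nonneg
    (tendsto_nhdsWithin_iff.2 ⟨hε, .of_forall hεpos⟩)
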